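/- arXiv:2309.13499 — 4 statements merged into one kernel-verified Lean document; each statement's English description precedes it below -/
import Mathlib

section
/- (Theorem 1: compositionality for acyclic cluster interconnections.) Assume: (DAG) the cluster interconnection relation R is acyclic, i.e., for every k ∈ K, ¬ Relation.TransGen R k k; (i) for every agent i ∈ I, the pair (w i, x̄ᵢ) weakly satisfies the contract (A i, G i), i.e., for every t ≥ 0, whenever w i (s) ∈ A i (s) for all s ∈ [0,t] then x̄ᵢ(s) ∈ G i (s) for all s ∈ [0,t]; (ii) for every i ∈ I and every t ≥ 0, every tuple p ∈ ∏_{j∈N(i)} ℝ^{n j} with p j ∈ Proj^j(G j (t)) for all j ∈ N(i) belongs to A i (t). Then for every s ≥ 0 and every i ∈ I, x̄ᵢ(s) ∈ G i (s); i.e., the global trajectory satisfies the composed contract whose guarantee is the product over clusters of the intersections of the member agents' guarantees. -/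
/-!
Acyclicity of the cluster relation together with finiteness makes the neighbor relation on agents
well-founded. Along it, the guarantees of the neighbors of `i` imply the assumption of `i` by
compatibility, and the weak contract of `i` turns this into its guarantee.
-/

open Set

/-- Weak satisfaction of the assume-guarantee contract `(A, G)` by the input-output pair `(w, y)`
from the initial time `t₀` on: whenever the input meets the assumption up to time `t`, the output
meets the guarantee up to time `t`, both endpoints included. -/
def WeaklySatisfies {T W Y : Type*} [Preorder T] (t₀ : T) (w : T → W) (y : T → Y)
    (A : T → Set W) (G : T → Set Y) : Prop :=
  ∀ t, t₀ ≤ t → (∀ s ∈ Icc t₀ t, w s ∈ A s) → ∀ s ∈ Icc t₀ t, y s ∈ G s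

theorem WeaklySatisfies.guarantee {T W Y : Type*} [Preorder T] {t₀ : T} {w : T → W} {y : T → Y}
    {A : T → Set W} {G : T → Set Y} (h : WeaklySatisfies t₀ w y A G)
    (hA : ∀ s, t₀ ≤ s → w s ∈ A s) (t : T) (ht : t₀ ≤ t) : y t ∈ G t :=
  h t ht (fun s hs => hA s hs.1) t (right_mem_Icc.2 ht)

/-- The interconnection relation between clusters: `k'` feeds `k` when some agent of `k` has an
adversarial neighbor in `k'`. -/
def ClusterRel {I K : Type*} (N : I → Set I) (κ : I → K) (k' k : K) : Prop :=
  ∃ i j : I, κ i = k ∧ j ∈ N i ∧ κ j = k'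

theorem wellFounded_of_forall_not_transGen {α : Type*} [Finite α] {r : α → α → Prop}
    (h : ∀ a, ¬ Relation.TransGen r a a) : WellFounded r :=
  have : Std.Irrefl (Relation.TransGen r) := ⟨h⟩
  Subrelation.wf Relation.TransGen.single (Finite.wellFounded_of_trans_of_irrefl _)

theorem wellFounded_neighbor_of_acyclic_clusterRel {I K : Type*} [Finite I] {N : I → Set I}
    {κ : I → K} (h : ∀ k, ¬ Relation.TransGen (ClusterRel N κ) k k) :
    WellFounded fun j i => j ∈ N i :=
  wellFounded_of_forall_not_transGen fun i hi =>
    h (κ i) (hi.lift κ fun j i hj => ⟨i, j, rfl, hj, rfl⟩)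

theorem compositionality_acyclic_general {I T : Type*} {X : I → Type*} [Preorder T] (t₀ : T)
    (x : ∀ i, T → X i) (N C : I → Set I) (hself : ∀ i, i ∈ C i)
    (A : ∀ i, T → Set (∀ j : N i, X j)) (G : ∀ i, T → Set (∀ j : C i, X j))
    (wf : WellFounded fun j i => j ∈ N i)
    (hweak : ∀ i, WeaklySatisfies t₀ (fun s => (N i).domRestrict (x · s))
      (fun s => (C i).domRestrict (x · s)) (A i) (G i))
    (hcompat : ∀ i t, t₀ ≤ t →
      univ.pi (fun j : N i => Function.eval ⟨j, hself j⟩ '' G j t) ⊆ A i t)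
    (i : I) : ∀ s, t₀ ≤ s → (C i).domRestrict (x · s) ∈ G i s := by
  induction i using wf.induction with
  | _ i neighbor_guarantee =>
    have assumption_holds : ∀ s, t₀ ≤ s → (N i).domRestrict (x · s) ∈ A i s := fun s hs =>
      hcompat i s hs fun j _ => ⟨_, neighbor_guarantee j j.2 s hs, rfl⟩
    exact (hweak i).guarantee assumption_holds

/-- Theorem 1: compositionality for acyclic cluster interconnections.
Agents `i : I` have states `x i`, adversarial neighbor sets `N i`, and a cluster
assignment `κ : I → K`.  The internal input of agent `i` at time `s` is the tuple of its
neighbors' states, and the cluster tuple of agent `i` is the tuple of states of the agents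
in its cluster.  If the cluster interconnection relation `R` is acyclic, every agent weakly
satisfies its contract `(A i, G i)`, and assumptions are implied by the neighbors'
projected guarantees, then every agent's cluster tuple satisfies its guarantee at all
times `s ≥ 0`. -/
theorem compositionality_acyclic
    {I K : Type*} [Fintype I]
    (n : I → ℕ)
    (x : ∀ i : I, ℝ → (Fin (n i) → ℝ))
    (N : I → Set I)
    (κ : I → K)
    (A : ∀ i : I, ℝ → Set (∀ j : N i, Fin (n j) → ℝ))
    (G : ∀ i : I, ℝ → Set (∀ j : {j : I // κ j = κ i}, Fin (n j) → ℝ))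
    -- (DAG) the cluster interconnection relation is acyclic
    (hdag : ∀ k : K, ¬ Relation.TransGen
      (fun k' k => ∃ i j : I, κ i = k ∧ j ∈ N i ∧ κ j = k') k k)
    -- (i) every agent weakly satisfies its contract
    (hweak : ∀ i : I, ∀ t : ℝ, 0 ≤ t →
      (∀ s ∈ Set.Icc (0:ℝ) t, (fun j : N i => x j s) ∈ A i s) →
      ∀ s ∈ Set.Icc (0:ℝ) t, (fun j : {j : I // κ j = κ i} => x j s) ∈ G i s)
    -- (ii) neighbors' projected guarantees imply the assumptions
    (hcompat : ∀ i : I, ∀ t : ℝ, 0 ≤ t →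
      ∀ pvec : ∀ j : N i, Fin (n j) → ℝ,
        (∀ j : N i, ∃ q ∈ G (j : I) t, q ⟨(j : I), rfl⟩ = pvec j) →
        pvec ∈ A i t) :
    ∀ s : ℝ, 0 ≤ s → ∀ i : I,
      (fun j : {j : I // κ j = κ i} => x j s) ∈ G i s :=
  fun s hs i => compositionality_acyclic_general 0 x N (fun i => {j | κ j = κ i}) (fun _ => rfl) A G
    (wellFounded_neighbor_of_acyclic_clusterRel hdag) hweak
    (fun i t ht p hp => hcompat i t ht p fun j => hp j trivial) i s hs
end

section
/- (Theorem 2: compositionality for general, possibly cyclic, interconnections under uniform strong satisfaction.) Assume: (i) for every i ∈ I, x i (0) ∈ Proj^i(G i (0)); (ii) for every agent i ∈ I, the pair (w i, x̄ᵢ) uniformly strongly satisfies the contract (A i, G i), i.e., there exists δ i > 0 such that for every t ≥ 0, whenever w i (s) ∈ A i (s) for all s ∈ [0,t] then x̄ᵢ(s) ∈ G i (s) for all s ∈ [0, t+δ i]; (iii) for every i ∈ I and every t ≥ 0, every tuple p ∈ ∏_{j∈N(i)} ℝ^{n j} with p j ∈ Proj^j(G j (t)) for all j ∈ N(i) belongs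 to A i (t). Then for every s ≥ 0 and every i ∈ I, x̄ᵢ(s) ∈ G i (s); i.e., the global trajectory satisfies the composed contract whose guarantee is the product over clusters of the intersections of the member agents' guarantees. -/
/-!
Finitely many agents have a common horizon `δ > 0`. If the guarantees hold up to time `t`,
compatibility turns them into everybody's assumptions up to `t`, and strong satisfaction returns
the guarantees up to `t + δ`. A cyclic interconnection is no obstacle because the gain `δ` does not
depend on `t`, so by the Archimedean property the steps `0, δ, 2δ, …` exhaust all times. What is
propagated is only that each state lies in the projection of its own guarantee, since that is all
that is known at time `0`.
-/

theorem forall_nonneg_of_extend_Icc {T : Type*} [AddCommMonoid T] [LinearOrder T]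
    [IsOrderedAddMonoid T] [Archimedean T] {P : T → Prop} {δ : T} (hδ : 0 < δ)
    (zero : P 0)
    (extend : ∀ t, 0 ≤ t → (∀ s ∈ Set.Icc 0 t, P s) → ∀ s ∈ Set.Icc 0 (t + δ), P s) :
    ∀ s, 0 ≤ s → P s := by
  have forall_Icc_nsmul (k : ℕ) : ∀ s ∈ Set.Icc 0 (k • δ), P s := by
    induction k with
    | zero => simpa using zero
    | succ k ih => simpa only [succ_nsmul] using extend (k • δ) (nsmul_nonneg hδ.le k) ih
  intro s hs
  obtain ⟨k, hk⟩ := Archimedean.arch s hδ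
  exact forall_Icc_nsmul k s ⟨hs, hk⟩

/-- Strong satisfaction of the assume-guarantee contract `(A, G)` by the pair of an input signal
`w` and an output signal `y`, with horizon `δ`: an assumption that holds up to time `t` forces the
guarantee up to time `t + δ`. Uniform strong satisfaction is the existence of a horizon `δ > 0`,
which is kept as a parameter here so that it can be shared between agents. -/
def StronglySatisfies {T V Y : Type*} [Zero T] [Add T] [Preorder T] (δ : T)
    (w : T → V) (y : T → Y) (A : T → Set V) (G : T → Set Y) : Prop :=
  ∀ t, 0 ≤ t → (∀ s ∈ Set.Icc 0 t, w s ∈ A s) → ∀ s ∈ Set.Icc 0 (t + δ), y s ∈ G s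

theorem StronglySatisfies.anti {T V Y : Type*} [Zero T] [Add T] [Preorder T] [AddLeftMono T]
    {δ ε : T} {w : T → V} {y : T → Y} {A : T → Set V} {G : T → Set Y}
    (h : StronglySatisfies δ w y A G) (hε : ε ≤ δ) : StronglySatisfies ε w y A G :=
  fun t ht hA s hs => h t ht hA s ⟨hs.1, hs.2.trans (add_le_add_right hε t)⟩

theorem exists_common_horizon {T : Type*} [Zero T] [Add T] [LinearOrder T] [AddLeftMono T]
    [NoMaxOrder T] {I : Type*} [Finite I] {V Y : I → Type*}
    {w : ∀ i, T → V i} {y : ∀ i, T → Y i} {A : ∀ i, T → Set (V i)} {G : ∀ i, T → Set (Y i)}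
    (h : ∀ i, ∃ δ, 0 < δ ∧ StronglySatisfies δ (w i) (y i) (A i) (G i)) :
    ∃ δ, 0 < δ ∧ ∀ i, StronglySatisfies δ (w i) (y i) (A i) (G i) := by
  choose δ δ_pos hδ using h
  obtain ⟨⟨ε, ε_pos⟩, hε⟩ := Finite.exists_ge fun i => (⟨δ i, δ_pos i⟩ : Set.Ioi (0 : T))
  exact ⟨ε, ε_pos, fun i => (hδ i).anti (hε i)⟩

/-- The projection `Projⁱ(S)` of a set `S` of tuples indexed by `C` onto the coordinate `i ∈ C`.
It is a set in `X i` rather than in `X ↑⟨i, hi⟩`, as the image under `Function.eval` would be. -/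
def coordProj {I : Type*} {X : I → Type*} {C : Set I} {i : I} (hi : i ∈ C)
    (S : Set (∀ j : C, X j)) : Set (X i) :=
  {v | ∃ q ∈ S, q ⟨i, hi⟩ = v}

theorem compositionality_cyclic_general
    {T : Type*} [AddCommMonoid T] [LinearOrder T] [IsOrderedAddMonoid T] [Archimedean T]
    {I : Type*} {X : I → Type*} (x : ∀ i, T → X i)
    (N C : I → Set I) (self_mem : ∀ i, i ∈ C i)
    (A : ∀ i, T → Set (∀ j : N i, X j)) (G : ∀ i, T → Set (∀ j : C i, X j))
    (hinit : ∀ i, x i 0 ∈ coordProj (self_mem i) (G i 0))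
    (hstrong : ∃ δ, 0 < δ ∧ ∀ i,
      StronglySatisfies δ (fun s (j : N i) => x j s) (fun s (j : C i) => x j s) (A i) (G i))
    (hcompat : ∀ i t, 0 ≤ t → ∀ p : ∀ j : N i, X j,
      (∀ j : N i, p j ∈ coordProj (self_mem j) (G j t)) → p ∈ A i t) :
    ∀ s, 0 ≤ s → ∀ i, (fun j : C i => x j s) ∈ G i s := by
  obtain ⟨δ, δ_pos, hδ⟩ := hstrong
  have guarantee_extends (t : T) (ht : 0 ≤ t)
      (h : ∀ s ∈ Set.Icc 0 t, ∀ i, x i s ∈ coordProj (self_mem i) (G i s)) :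
      ∀ s ∈ Set.Icc 0 (t + δ), ∀ i, (fun j : C i => x j s) ∈ G i s :=
    fun s hs i => hδ i t ht (fun r hr => hcompat i r hr.1 _ fun j => h r hr j) s hs
  have mem_projection : ∀ s, 0 ≤ s → ∀ i, x i s ∈ coordProj (self_mem i) (G i s) :=
    forall_nonneg_of_extend_Icc δ_pos hinit fun t ht h s hs i =>
      ⟨_, guarantee_extends t ht h s hs i, rfl⟩
  exact fun s hs => guarantee_extends s hs (fun r hr => mem_projection r hr.1) s
    ⟨hs, le_add_of_nonneg_right δ_pos.le⟩

/-- Theorem 2: compositionality for general (possibly cyclic) interconnections under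
uniform strong satisfaction.  If (i) every agent's initial state lies in the projection
of its guarantee, (ii) every agent uniformly strongly satisfies its contract
`(A i, G i)`, and (iii) assumptions are implied by the neighbors' projected guarantees,
then every agent's cluster tuple satisfies its guarantee at all times `s ≥ 0`. -/
theorem compositionality_cyclic
    {I K : Type*} [Fintype I]
    (n : I → ℕ)
    (x : ∀ i : I, ℝ → (Fin (n i) → ℝ))
    (N : I → Set I)
    (κ : I → K)
    (A : ∀ i : I, ℝ → Set (∀ j : N i, Fin (n j) → ℝ))
    (G : ∀ i : I, ℝ → Set (∀ j : {j : I // κ j = κ i}, Fin (n j) → ℝ))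
    -- (i) initial states lie in the projections of the guarantees
    (hinit : ∀ i : I, ∃ q ∈ G i 0, q ⟨i, rfl⟩ = x i 0)
    -- (ii) every agent uniformly strongly satisfies its contract
    (hstrong : ∀ i : I, ∃ δ : ℝ, 0 < δ ∧ ∀ t : ℝ, 0 ≤ t →
      (∀ s ∈ Set.Icc (0:ℝ) t, (fun j : N i => x j s) ∈ A i s) →
      ∀ s ∈ Set.Icc (0:ℝ) (t + δ),
        (fun j : {j : I // κ j = κ i} => x j s) ∈ G i s)
    -- (iii) neighbors' projected guarantees imply the assumptions
    (hcompat : ∀ i : I, ∀ t : ℝ, 0 ≤ t →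
      ∀ pvec : ∀ j : N i, Fin (n j) → ℝ,
        (∀ j : N i, ∃ q ∈ G (j : I) t, q ⟨(j : I), rfl⟩ = pvec j) →
        pvec ∈ A i t) :
    ∀ s : ℝ, 0 ≤ s → ∀ i : I,
      (fun j : {j : I // κ j = κ i} => x j s) ∈ G i s := by
  exact compositionality_cyclic_general x N (fun i => {j | κ j = κ i}) (fun _ => rfl) A G
    hinit (exists_common_horizon hstrong) hcompat
end

section
/- (Transformed-error dynamics, equation (7) of the paper.) Let e, γ : ℝ → ℝ and t ∈ ℝ, and suppose e has derivative e' at t, γ has derivative g' at t, γ(t) > 0, and −1 < e(t)/γ(t) < 0. Set ê := e(t)/γ(t), J := −1/(γ(t)·ê·(1+ê)), and α := −g'/γ(t). Then the transformed error s ↦ ln((e(s)+γ(s))/(−e(s))) (which equals ln(−(ê(s)+1)/ê(s)) for ê(s) = e(s)/γ(s)) has derivative at t equal to J·(e' + α·e(t)). -/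
/-!
The transformed error is `T ∘ ê` with `T x = log (-(x + 1) / x)` and `ê = e / γ`. Since
`T' x = -1 / (x (1 + x))` and `ê' = (e' + α e) / γ` with `α = -γ' / γ`, the chain rule gives
the derivative `J (e' + α e)`, where `J = T' ê / γ`.
-/

open Topology

/-- The error transformation `ê ↦ ln (-(ê + 1) / ê)` of funnel control, carrying the modulated
error to the transformed error. It is meant on `(-1, 0)`, which it maps onto `ℝ`; `Real.log`
extends it to the other `x` as `log |(x + 1) / x|`, with value `0` at `-1` and `0`. -/
noncomputable def funnelTransform (x : ℝ) : ℝ :=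
  Real.log (-(x + 1) / x)

theorem hasDerivAt_funnelTransform {x : ℝ} (hx₀ : x ≠ 0) (hx₁ : 1 + x ≠ 0) :
    HasDerivAt funnelTransform (-1 / (x * (1 + x))) x := by
  have hnum : -(x + 1) ≠ 0 := by rwa [neg_ne_zero, add_comm]
  have hquot : HasDerivAt (fun y : ℝ => -(y + 1) / y) (1 / x ^ 2) x :=
    (((hasDerivAt_id' x).add_const 1).fun_neg.fun_div (hasDerivAt_id' x) hx₀).congr_deriv (by ring)
  refine (hquot.log (div_ne_zero hnum hx₀)).congr_deriv ?_
  rw [add_comm x 1]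
  field_simp

theorem funnelTransform_div (a : ℝ) {c : ℝ} (hc : c ≠ 0) :
    funnelTransform (a / c) = Real.log ((a + c) / -a) := by
  have hquot : -(a / c + 1) / (a / c) = (a + c) / -a := by
    rw [div_add_one hc, ← neg_div, div_div_div_cancel_right₀ hc, neg_div, div_neg]
  rw [funnelTransform, hquot]

theorem funnelTransform_div_eventuallyEq {X : Type*} [TopologicalSpace X] (e : X → ℝ)
    {γ : X → ℝ} {t : X} (hγ : ContinuousAt γ t) (hγt : γ t ≠ 0) :
    (fun s => funnelTransform (e s / γ s)) =ᶠ[𝓝 t]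
      fun s => Real.log ((e s + γ s) / -e s) :=
  (hγ.eventually_ne hγt).mono fun s hs => funnelTransform_div (e s) hs

theorem hasDerivAt_modulatedError {𝕜 𝕜' : Type*} [NontriviallyNormedField 𝕜]
    [NontriviallyNormedField 𝕜'] [NormedAlgebra 𝕜 𝕜'] {e γ : 𝕜 → 𝕜'} {t : 𝕜} {e' g' : 𝕜'}
    (he : HasDerivAt e e' t) (hγ : HasDerivAt γ g' t) (hγt : γ t ≠ 0) :
    HasDerivAt (fun s => e s / γ s) ((e' + (-g' / γ t) * e t) / γ t) t := by
  refine (he.fun_div hγ hγt).congr_deriv ?_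
  field_simp
  ring

/-- Transformed-error dynamics (equation (7)): if `e` has derivative `e'` at `t`, `γ` has
derivative `g'` at `t`, `γ t > 0` and the modulated error `ê = e t / γ t` lies in
`(-1,0)`, then the transformed error `s ↦ ln((e s + γ s)/(-e s))` has derivative at `t`
equal to `J·(e' + α·e t)`, where `J = -1/(γ t · ê · (1+ê))` and `α = -g'/γ t`. -/
theorem transformed_error_dynamics
    (e γ : ℝ → ℝ) (t e' g' : ℝ)
    (he : HasDerivAt e e' t)
    (hγ : HasDerivAt γ g' t)
    (hγpos : 0 < γ t)
    (hlow : -1 < e t / γ t)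
    (hhigh : e t / γ t < 0) :
    HasDerivAt (fun s => Real.log ((e s + γ s) / (-(e s))))
      ((-1 / (γ t * (e t / γ t) * (1 + e t / γ t))) * (e' + (-g' / γ t) * e t)) t := by
  have hγt : γ t ≠ 0 := hγpos.ne'
  have hmod : HasDerivAt (fun s => e s / γ s) ((e' + (-g' / γ t) * e t) / γ t) t :=
    hasDerivAt_modulatedError he hγ hγt
  have htrans : HasDerivAt funnelTransform
      (-1 / (e t / γ t * (1 + e t / γ t))) (e t / γ t) :=
    hasDerivAt_funnelTransform hhigh.ne (neg_lt_iff_pos_add'.mp hlow).ne'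
  have hchain := (htrans.comp t hmod).congr_of_eventuallyEq
    (funnelTransform_div_eventuallyEq e hγ.continuousAt hγt).symm
  refine hchain.congr_deriv ?_
  rw [mul_assoc (γ t), div_mul_div_comm, mul_comm (γ t), mul_div_right_comm]
end

section
/- (Funnel-based satisfaction of the eventually-always operator.) Let 0 ≤ a ≤ b, 0 ≤ ā ≤ b̄, r > 0, ρ^max ∈ ℝ, γ : ℝ → ℝ nonincreasing on [0,∞), and h : ℝ → ℝ. Suppose there exists t* ∈ [a+ā, b+ā] with γ(t*) ≤ ρ^max − r, and ρ^max − γ(t) < h(t) < ρ^max for all t ≥ 0. Then the robust semantics of F_{[a,b]}G_{[ā,b̄]} satisfies r ≤ sup{ inf{ h(t₂) | t₂ ∈ [t₁+ā, t₁+b̄] } | t₁ ∈ [a,b] } ≤ ρ^max; in particular it is strictly positive. -/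
/-!
A nondecreasing lower envelope `ℓ` of `h` (for a funnel, `ℓ = ρ^max − γ`) turns the single
inequality `r ≤ ℓ (t₀ + ā)` into `r ≤ h` on the whole window `[t₀ + ā, t₀ + b̄]`, so `t₀` witnesses
the lower bound on the supremum. The same envelope bounds `h` below on every window, hence each
infimum is a genuine one and lies below the value of `h` at the left endpoint.
-/

open Set

/-- The robust semantics of the always operator `G_{[ā,b̄]}` at time `t`, for the robustness signal
`h`. The infimum is that of `R` and is meaningful only when `h` is bounded below on the window and
the window is nonempty. -/
def alwaysRobustness {T R : Type*} [Add T] [Preorder T] [InfSet R]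
    (h : T → R) (abar bbar t : T) : R :=
  sInf (h '' Icc (t + abar) (t + bbar))

/-- The robust semantics of `F_{[a,b]}G_{[ā,b̄]}` at time `0`, for the robustness signal `h`. The
outer window is written `[a, b]` rather than `[0 + a, 0 + b]`, so `T` needs no zero. -/
def eventuallyAlwaysRobustness {T R : Type*} [Add T] [Preorder T] [InfSet R] [SupSet R]
    (h : T → R) (a b abar bbar : T) : R :=
  sSup (alwaysRobustness h abar bbar '' Icc a b)

theorem mem_lowerBounds_image_Ici_of_monotoneOn {T R : Type*} [Preorder T] [Preorder R]
    {ℓ h : T → R} {c : T} (hℓ : MonotoneOn ℓ (Ici c)) (hℓh : ∀ t ∈ Ici c, ℓ t ≤ h t) :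
    ℓ c ∈ lowerBounds (h '' Ici c) := by
  rintro _ ⟨t, hct, rfl⟩
  exact (hℓ self_mem_Ici hct hct).trans (hℓh t hct)

section Bounds

variable {T R : Type*} [Add T] [Preorder T] [ConditionallyCompleteLattice R]
  {h : T → R} {a b abar bbar t : T} {r ρmax : R}

theorem le_alwaysRobustness [AddLeftMono T] (hwindow : abar ≤ bbar)
    (hr : r ∈ lowerBounds (h '' Icc (t + abar) (t + bbar))) :
    r ≤ alwaysRobustness h abar bbar t :=
  le_csInf ((nonempty_Icc.2 (by gcongr)).image h) hr

theorem alwaysRobustness_le_left [AddLeftMono T] (hwindow : abar ≤ bbar)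
    (hbdd : BddBelow (h '' Icc (t + abar) (t + bbar))) :
    alwaysRobustness h abar bbar t ≤ h (t + abar) :=
  csInf_le hbdd (mem_image_of_mem h (left_mem_Icc.2 (by gcongr)))

theorem eventuallyAlwaysRobustness_mem_Icc (ht : t ∈ Icc a b)
    (hr : r ≤ alwaysRobustness h abar bbar t)
    (hρ : ∀ s ∈ Icc a b, alwaysRobustness h abar bbar s ≤ ρmax) :
    eventuallyAlwaysRobustness h a b abar bbar ∈ Icc r ρmax := by
  have hupper : ρmax ∈ upperBounds (alwaysRobustness h abar bbar '' Icc a b) :=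
    forall_mem_image.2 hρ
  have hmem := mem_image_of_mem (alwaysRobustness h abar bbar) ht
  exact ⟨hr.trans (le_csSup ⟨ρmax, hupper⟩ hmem), csSup_le ⟨_, hmem⟩ hupper⟩

end Bounds

theorem funnel_eventually_always_operator_general {T R : Type*}
    [Add T] [Preorder T] [AddLeftMono T] [AddRightMono T] [ConditionallyCompleteLattice R]
    {a b abar bbar : T} {r ρmax : R} {ℓ h : T → R} (hwindow : abar ≤ bbar)
    (hℓ : MonotoneOn ℓ (Ici (a + abar)))
    (hr : ∃ t₀ ∈ Icc a b, r ≤ ℓ (t₀ + abar))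
    (hfunnel : ∀ t ∈ Ici (a + abar), ℓ t ≤ h t ∧ h t ≤ ρmax) :
    eventuallyAlwaysRobustness h a b abar bbar ∈ Icc r ρmax := by
  have hstart : ∀ t ∈ Icc a b, a + abar ≤ t + abar := fun t ht => by gcongr; exact ht.1
  have hlower : ∀ t ∈ Icc a b, ℓ (t + abar) ∈ lowerBounds (h '' Icc (t + abar) (t + bbar)) := by
    intro t ht
    have hsub : Ici (t + abar) ⊆ Ici (a + abar) := Ici_subset_Ici.2 (hstart t ht)
    exact lowerBounds_mono_set (image_mono Icc_subset_Ici_self) <|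
      mem_lowerBounds_image_Ici_of_monotoneOn (hℓ.mono hsub) fun s hs => (hfunnel s (hsub hs)).1
  obtain ⟨t₀, ht₀, hrt₀⟩ := hr
  refine eventuallyAlwaysRobustness_mem_Icc ht₀
    (hrt₀.trans (le_alwaysRobustness hwindow (hlower t₀ ht₀))) fun t ht => ?_
  calc alwaysRobustness h abar bbar t
      ≤ h (t + abar) := alwaysRobustness_le_left hwindow ⟨_, hlower t ht⟩
    _ ≤ ρmax := (hfunnel _ (hstart t ht)).2

/-- Funnel-based satisfaction of the eventually-always operator: with `0 ≤ a ≤ b`,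
`0 ≤ ā ≤ b̄`, a nonincreasing funnel `γ` on `[0,∞)` such that `γ(t*) ≤ ρ^max − r` for
some `t* ∈ [a+ā, b+ā]`, and a robustness signal `h` staying in the funnel
`(ρ^max − γ(t), ρ^max)` for all `t ≥ 0`, the robust semantics
`sup_{t₁∈[a,b]} inf_{t₂∈[t₁+ā, t₁+b̄]} h(t₂)` lies in `[r, ρ^max]`, and in particular is
strictly positive. -/
theorem funnel_eventually_always_operator
    (a b abar bbar r ρmax : ℝ) (γ h : ℝ → ℝ)
    (ha : 0 ≤ a) (hab : a ≤ b) (habar : 0 ≤ abar) (habbar : abar ≤ bbar)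
    (hr : 0 < r)
    (hγmono : AntitoneOn γ (Set.Ici 0))
    (hγ : ∃ tstar ∈ Set.Icc (a + abar) (b + abar), γ tstar ≤ ρmax - r)
    (hfunnel : ∀ t : ℝ, 0 ≤ t → ρmax - γ t < h t ∧ h t < ρmax) :
    r ≤ sSup ((fun t₁ => sInf (h '' Set.Icc (t₁ + abar) (t₁ + bbar))) '' Set.Icc a b) ∧
    sSup ((fun t₁ => sInf (h '' Set.Icc (t₁ + abar) (t₁ + bbar))) '' Set.Icc a b) ≤ ρmax ∧
    0 < sSup ((fun t₁ => sInf (h '' Set.Icc (t₁ + abar) (t₁ + bbar))) '' Set.Icc a b) := by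
  have hstart : 0 ≤ a + abar := add_nonneg ha habar
  have hwitness : ∃ t₀ ∈ Icc a b, r ≤ ρmax - γ (t₀ + abar) := by
    obtain ⟨tstar, ⟨hlo, hhi⟩, hγtstar⟩ := hγ
    refine ⟨tstar - abar, ⟨le_sub_iff_add_le.2 hlo, sub_le_iff_le_add.2 hhi⟩, ?_⟩
    rw [sub_add_cancel]
    exact le_sub_comm.1 hγtstar
  have henvelope : MonotoneOn (fun t => ρmax - γ t) (Ici (a + abar)) := fun s hs t ht hst =>
    sub_le_sub_left (hγmono (hstart.trans hs) (hstart.trans ht) hst) ρmax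
  obtain ⟨hlower, hupper⟩ :=
    funnel_eventually_always_operator_general habbar henvelope hwitness fun t ht =>
      (hfunnel t (hstart.trans ht)).imp le_of_lt le_of_lt
  exact ⟨hlower, hupper, hr.trans_le hlower⟩
end
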